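/- Let ε and b satisfy 0 < ε ≤ 1, 0 < b, and bε ≤ 1/2, and let u = (0, 0, aε) and c = (0, bε, 0). Then there exists ξ̃ with 0 < ξ̃ < ξ₀ such that d_g(u, c) = bε √((1 + ξ̃)² a²/b² + 1). -/

import Mathlib

open Real MeasureTheory

noncomputable section

/-- `ℝ³` with the Euclidean norm. -/
abbrev E3 : Type := EuclideanSpace ℝ (Fin 3)

/-- The bump function `f(y) = A (1 + cos (π y))`. -/
def f (A y : ℝ) : ℝ := A * (1 + Real.cos (Real.pi * y))

/-- The g-length of a path `γ` in the perturbed metric: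
`L_g(γ) = ∫₀¹ √(γ₁′(t)² + γ₂′(t)² + (1 + f(γ₂(t))) γ₃′(t)²) dt`. -/
def Lg (A : ℝ) (γ : ℝ → E3) : ℝ :=
  ∫ t in (0:ℝ)..1,
    Real.sqrt ((deriv γ t 0) ^ 2 + (deriv γ t 1) ^ 2
      + (1 + f A (γ t 1)) * (deriv γ t 2) ^ 2)

/-- The geodesic distance: the infimum of g-lengths of C¹ paths from `p` to `q`. -/
def dg (A : ℝ) (p q : E3) : ℝ :=
  sInf {L : ℝ | ∃ γ : ℝ → E3,
    ContDiff ℝ 1 γ ∧ γ 0 = p ∧ γ 1 = q ∧ L = Lg A γ}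

/-- A point of `ℝ³` from its three coordinates. -/
def pt (x y z : ℝ) : E3 := (EuclideanSpace.equiv (Fin 3) ℝ).symm ![x, y, z]

/-- `a = 1/√2`. -/
def a : ℝ := 1 / Real.sqrt 2

/-- `ξ₀ = √(1 + f(0)) − 1`. -/
def ξ₀ (A : ℝ) : ℝ := Real.sqrt (1 + f A 0) - 1

/-!
Lower bound: if `S` solves the eikonal equation `|dS| = 1` of a metric, every path from `p` to `q`
has length at least `S q - S p`. For `dx₁² + dx₂² + (1 + φ(x₂)) dx₃²` there are separated solutions
`S = l x₁ + ∫ σ(x₂) dx₂ + n x₃`, and with `l` and `n` the direction cosines of `q - p` the slope `σ`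
is at least the remaining direction cosine, strictly so where `φ > 0`. Hence `S q - S p` exceeds the
Euclidean distance, which is the asserted formula at `ξ = 0`.

Upper bound: the straight segment leaves the height at which `φ` is maximal, so it is strictly
shorter than in the constant metric with that maximal weight, which is the formula at `ξ = ξ₀`.
The formula is continuous in `ξ`, so an intermediate `ξ` gives the distance exactly.
-/

section Definitions

variable (φ : ℝ → ℝ)

/-- The norm of the tangent vector `v` at height `y`, in the metric
`dx₁² + dx₂² + (1 + φ(x₂)) dx₃²` that generalizes `g` to an arbitrary profile `φ`. -/
def warpedSpeed (y : ℝ) (v : E3) : ℝ := √(v 0 ^ 2 + v 1 ^ 2 + (1 + φ y) * v 2 ^ 2)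

/-- The length of a path in the metric `dx₁² + dx₂² + (1 + φ(x₂)) dx₃²`, so that `Lg A` is
`warpedLength (f A)`. -/
def warpedLength (γ : ℝ → E3) : ℝ := ∫ t in (0 : ℝ)..1, warpedSpeed φ (γ t 1) (deriv γ t)

/-- The geodesic distance of the metric `dx₁² + dx₂² + (1 + φ(x₂)) dx₃²`, so that `dg A` is
`warpedDist (f A)`. -/
def warpedDist (p q : E3) : ℝ :=
  sInf {L : ℝ | ∃ γ : ℝ → E3, ContDiff ℝ 1 γ ∧ γ 0 = p ∧ γ 1 = q ∧ L = warpedLength φ γ}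

/-- The derivative `σ` of the second-coordinate part of a separated solution
`S(x) = l x₁ + ∫ σ(x₂) dx₂ + n x₃` of the eikonal equation `|dS| = 1`, that is,
`l² + σ² + n² / (1 + φ) = 1`. -/
def eikonalSlope (l n y : ℝ) : ℝ := √(1 - l ^ 2 - n ^ 2 / (1 + φ y))

end Definitions

section Speed

variable {φ : ℝ → ℝ} {y M : ℝ} {v : E3}

lemma warpedSpeed_le_sqrt (hM : φ y ≤ M) :
    warpedSpeed φ y v ≤ √(v 0 ^ 2 + v 1 ^ 2 + (1 + M) * v 2 ^ 2) := by
  unfold warpedSpeed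
  gcongr

lemma warpedSpeed_lt_sqrt (hy : 0 ≤ φ y) (hM : φ y < M) (hv : v 2 ≠ 0) :
    warpedSpeed φ y v < √(v 0 ^ 2 + v 1 ^ 2 + (1 + M) * v 2 ^ 2) := by
  refine Real.sqrt_lt_sqrt (by positivity) ?_
  gcongr

end Speed

section Calibration

variable {φ : ℝ → ℝ} {l n y : ℝ}

lemma continuous_eikonalSlope (hφ : Continuous φ) (hφ0 : ∀ y, 0 ≤ φ y) (l n : ℝ) :
    Continuous (eikonalSlope φ l n) := by
  have h : ∀ y, 1 + φ y ≠ 0 := fun y ↦ by linarith [hφ0 y]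
  unfold eikonalSlope
  fun_prop (disch := exact h _)

lemma sqrt_le_eikonalSlope (hy : 0 ≤ φ y) :
    √(1 - l ^ 2 - n ^ 2) ≤ eikonalSlope φ l n y :=
  Real.sqrt_le_sqrt (sub_le_sub_left (div_le_self (sq_nonneg n) (by linarith)) _)

lemma sqrt_lt_eikonalSlope (hn : n ≠ 0) (hln : l ^ 2 + n ^ 2 ≤ 1) (hy : 0 < φ y) :
    √(1 - l ^ 2 - n ^ 2) < eikonalSlope φ l n y :=
  Real.sqrt_lt_sqrt (by linarith) (sub_lt_sub_left (div_lt_self (by positivity) (by linarith)) _)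

lemma sub_mul_sqrt_lt_integral_eikonalSlope {y₀ y₁ : ℝ} (hφ : Continuous φ)
    (hφ0 : ∀ y, 0 ≤ φ y) (hy : y₀ < y₁) (hpos : ∃ y ∈ Set.Icc y₀ y₁, 0 < φ y)
    (hn : n ≠ 0) (hln : l ^ 2 + n ^ 2 ≤ 1) :
    (y₁ - y₀) * √(1 - l ^ 2 - n ^ 2) < ∫ y in y₀..y₁, eikonalSlope φ l n y := by
  obtain ⟨y, hyI, hφy⟩ := hpos
  rw [← smul_eq_mul, ← intervalIntegral.integral_const]
  exact intervalIntegral.integral_lt_integral_of_continuousOn_of_le_of_exists_lt hy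
    continuousOn_const (continuous_eikonalSlope hφ hφ0 l n).continuousOn
    (fun y _ ↦ sqrt_le_eikonalSlope (hφ0 y)) ⟨y, hyI, sqrt_lt_eikonalSlope hn hln hφy⟩

lemma covector_le_warpedSpeed (hy : 0 ≤ φ y) (hln : l ^ 2 + n ^ 2 ≤ 1) (v : E3) :
    l * v 0 + eikonalSlope φ l n y * v 1 + n * v 2 ≤ warpedSpeed φ y v := by
  set σ := eikonalSlope φ l n y with hσ
  set w := 1 + φ y with hw
  have hw1 : 1 ≤ w := by linarith
  obtain ⟨m, rfl⟩ : ∃ m, n = w * m := ⟨n / w, by field_simp⟩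
  have unit_covector : l ^ 2 + σ ^ 2 + w * m ^ 2 = 1 := by
    have hdiv : (w * m) ^ 2 / w = w * m ^ 2 := by field_simp
    have hle : (w * m) ^ 2 / w ≤ (w * m) ^ 2 := div_le_self (sq_nonneg _) hw1
    rw [hσ, eikonalSlope, Real.sq_sqrt (by linarith), ← hw, hdiv]
    ring
  refine Real.le_sqrt_of_sq_le ?_
  calc (l * v 0 + σ * v 1 + w * m * v 2) ^ 2
      = (l ^ 2 + σ ^ 2 + w * m ^ 2) * (v 0 ^ 2 + v 1 ^ 2 + w * v 2 ^ 2)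
          - ((l * v 1 - σ * v 0) ^ 2 + w * (l * v 2 - m * v 0) ^ 2
            + w * (σ * v 2 - m * v 1) ^ 2) := by ring
    _ ≤ (l ^ 2 + σ ^ 2 + w * m ^ 2) * (v 0 ^ 2 + v 1 ^ 2 + w * v 2 ^ 2) :=
        sub_le_self _ (by positivity)
    _ = v 0 ^ 2 + v 1 ^ 2 + w * v 2 ^ 2 := by rw [unit_covector, one_mul]

end Calibration

section Paths

variable {φ : ℝ → ℝ} {γ : ℝ → E3}

lemma hasDerivAt_coord (hγ : ContDiff ℝ 1 γ) (i : Fin 3) (t : ℝ) :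
    HasDerivAt (fun s ↦ γ s i) (deriv γ t i) t :=
  (EuclideanSpace.proj (𝕜 := ℝ) i).hasFDerivAt.comp_hasDerivAt t
    (hγ.differentiable one_ne_zero t).hasDerivAt

lemma continuous_coord (hγ : ContDiff ℝ 1 γ) (i : Fin 3) : Continuous fun t ↦ γ t i :=
  (EuclideanSpace.proj (𝕜 := ℝ) i).continuous.comp hγ.continuous

lemma continuous_deriv_coord (hγ : ContDiff ℝ 1 γ) (i : Fin 3) :
    Continuous fun t ↦ deriv γ t i :=
  (EuclideanSpace.proj (𝕜 := ℝ) i).continuous.comp (hγ.continuous_deriv le_rfl)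

lemma integral_deriv_coord (hγ : ContDiff ℝ 1 γ) (i : Fin 3) (s t : ℝ) :
    ∫ r in s..t, deriv γ r i = γ t i - γ s i :=
  intervalIntegral.integral_eq_sub_of_hasDerivAt (fun r _ ↦ hasDerivAt_coord hγ i r)
    ((continuous_deriv_coord hγ i).intervalIntegrable s t)

lemma continuous_warpedSpeed_deriv (hφ : Continuous φ) (hγ : ContDiff ℝ 1 γ) :
    Continuous fun t ↦ warpedSpeed φ (γ t 1) (deriv γ t) := by
  have hd := continuous_deriv_coord hγ
  have hw : Continuous fun t ↦ 1 + φ (γ t 1) :=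
    continuous_const.add (hφ.comp (continuous_coord hγ 1))
  exact ((((hd 0).pow 2).add ((hd 1).pow 2)).add (hw.mul ((hd 2).pow 2))).sqrt

lemma warpedLength_nonneg (φ : ℝ → ℝ) (γ : ℝ → E3) : 0 ≤ warpedLength φ γ :=
  intervalIntegral.integral_nonneg zero_le_one fun _ _ ↦ Real.sqrt_nonneg _

lemma calibration_le_warpedLength {l n : ℝ} (hφ : Continuous φ) (hφ0 : ∀ y, 0 ≤ φ y)
    (hln : l ^ 2 + n ^ 2 ≤ 1) (hγ : ContDiff ℝ 1 γ) :
    l * (γ 1 0 - γ 0 0) + (∫ y in γ 0 1..γ 1 1, eikonalSlope φ l n y) + n * (γ 1 2 - γ 0 2)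
      ≤ warpedLength φ γ := by
  have hd := continuous_deriv_coord hγ
  have hσ := continuous_eikonalSlope hφ hφ0 l n
  have change_of_variables :
      ∫ t in (0 : ℝ)..1, eikonalSlope φ l n (γ t 1) * deriv γ t 1
        = ∫ y in γ 0 1..γ 1 1, eikonalSlope φ l n y :=
    intervalIntegral.integral_comp_mul_deriv (fun t _ ↦ hasDerivAt_coord hγ 1 t)
      (hd 1).continuousOn hσ
  have hx : Continuous fun t ↦ l * deriv γ t 0 := (hd 0).const_mul l
  have hy : Continuous fun t ↦ eikonalSlope φ l n (γ t 1) * deriv γ t 1 :=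
    (hσ.comp (continuous_coord hγ 1)).mul (hd 1)
  have hz : Continuous fun t ↦ n * deriv γ t 2 := (hd 2).const_mul n
  have hxy : Continuous fun t ↦
      l * deriv γ t 0 + eikonalSlope φ l n (γ t 1) * deriv γ t 1 := hx.add hy
  calc l * (γ 1 0 - γ 0 0) + (∫ y in γ 0 1..γ 1 1, eikonalSlope φ l n y) + n * (γ 1 2 - γ 0 2)
      = ∫ t in (0 : ℝ)..1, (l * deriv γ t 0 + eikonalSlope φ l n (γ t 1) * deriv γ t 1
          + n * deriv γ t 2) := by
        rw [intervalIntegral.integral_add (hxy.intervalIntegrable 0 1)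
            (hz.intervalIntegrable 0 1),
          intervalIntegral.integral_add (hx.intervalIntegrable 0 1) (hy.intervalIntegrable 0 1),
          intervalIntegral.integral_const_mul, intervalIntegral.integral_const_mul,
          change_of_variables, integral_deriv_coord hγ, integral_deriv_coord hγ]
    _ ≤ warpedLength φ γ :=
        intervalIntegral.integral_mono zero_le_one
          ((hxy.add hz).intervalIntegrable 0 1)
          ((continuous_warpedSpeed_deriv hφ hγ).intervalIntegrable 0 1)
          fun t ↦ covector_le_warpedSpeed (hφ0 _) hln (deriv γ t)

end Paths

section Distance

variable {φ : ℝ → ℝ} {p q : E3}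

lemma warpedDist_le_warpedLength {γ : ℝ → E3} (hγ : ContDiff ℝ 1 γ) (h0 : γ 0 = p)
    (h1 : γ 1 = q) : warpedDist φ p q ≤ warpedLength φ γ := by
  refine csInf_le ⟨0, ?_⟩ ⟨γ, hγ, h0, h1, rfl⟩
  rintro _ ⟨γ', -, -, -, rfl⟩
  exact warpedLength_nonneg φ γ'

lemma contDiff_lineMap (p q : E3) : ContDiff ℝ 1 (AffineMap.lineMap p q : ℝ → E3) :=
  contDiff_const.lineMap contDiff_const contDiff_id

lemma le_warpedDist {L : ℝ}
    (hL : ∀ γ : ℝ → E3, ContDiff ℝ 1 γ → γ 0 = p → γ 1 = q → L ≤ warpedLength φ γ) :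
    L ≤ warpedDist φ p q := by
  refine le_csInf ⟨_, AffineMap.lineMap p q, contDiff_lineMap p q, by simp, by simp, rfl⟩ ?_
  rintro _ ⟨γ, hγ, h0, h1, rfl⟩
  exact hL γ hγ h0 h1

lemma calibration_le_warpedDist {l n : ℝ} (hφ : Continuous φ) (hφ0 : ∀ y, 0 ≤ φ y)
    (hln : l ^ 2 + n ^ 2 ≤ 1) :
    l * (q 0 - p 0) + (∫ y in p 1..q 1, eikonalSlope φ l n y) + n * (q 2 - p 2)
      ≤ warpedDist φ p q :=
  le_warpedDist fun γ hγ h0 h1 ↦ by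
    simpa only [h0, h1] using calibration_le_warpedLength hφ hφ0 hln hγ

lemma dist_sq_eq_coord (p q : E3) :
    dist p q ^ 2 = (q 0 - p 0) ^ 2 + (q 1 - p 1) ^ 2 + (q 2 - p 2) ^ 2 := by
  rw [dist_comm, EuclideanSpace.dist_sq_eq, Fin.sum_univ_three]
  simp only [Real.dist_eq, sq_abs]

lemma dist_lt_warpedDist (hφ : Continuous φ) (hφ0 : ∀ y, 0 ≤ φ y)
    (h1 : p 1 < q 1) (h2 : p 2 ≠ q 2) (hpos : ∃ y ∈ Set.Icc (p 1) (q 1), 0 < φ y) :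
    dist p q < warpedDist φ p q := by
  -- Calibrate with the eikonal solution that for `φ = 0` is linear with gradient
  -- `(q - p) / dist p q`.
  have hd : 0 < dist p q := dist_pos.2 fun h ↦ h2 (h ▸ rfl)
  have hsq := dist_sq_eq_coord p q
  set d := dist p q
  set l := (q 0 - p 0) / d with hl
  set m := (q 1 - p 1) / d with hm
  set n := (q 2 - p 2) / d with hn
  have unit_direction : l ^ 2 + m ^ 2 + n ^ 2 = 1 := by
    rw [hl, hm, hn]; field_simp; linarith
  have hm0 : 0 ≤ m := div_nonneg (by linarith) hd.le
  have hn0 : n ≠ 0 := div_ne_zero (sub_ne_zero.2 h2.symm) hd.ne'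
  have hln : l ^ 2 + n ^ 2 ≤ 1 := by linarith [sq_nonneg m]
  have hsqrt : √(1 - l ^ 2 - n ^ 2) = m := by
    rw [← Real.sqrt_sq hm0]; congr 1; linarith
  calc d = l * (q 0 - p 0) + (q 1 - p 1) * √(1 - l ^ 2 - n ^ 2) + n * (q 2 - p 2) := by
        rw [hsqrt, hl, hm, hn]; field_simp; linarith
    _ < l * (q 0 - p 0) + (∫ y in p 1..q 1, eikonalSlope φ l n y) + n * (q 2 - p 2) := by
        gcongr
        exact sub_mul_sqrt_lt_integral_eikonalSlope hφ hφ0 h1 hpos hn0 hln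
    _ ≤ warpedDist φ p q := calibration_le_warpedDist hφ hφ0 hln

lemma warpedLength_lineMap :
    warpedLength φ (AffineMap.lineMap p q)
      = ∫ t in (0 : ℝ)..1, warpedSpeed φ (AffineMap.lineMap (p 1) (q 1) t) (q - p) := by
  simp [warpedLength, AffineMap.hasDerivAt_lineMap.deriv, AffineMap.lineMap_apply]

lemma warpedDist_lt_sqrt {M : ℝ} (hφ : Continuous φ) (hφ0 : ∀ y, 0 ≤ φ y)
    (h1 : p 1 ≤ q 1) (h2 : p 2 ≠ q 2) (hM : ∀ y ∈ Set.Icc (p 1) (q 1), φ y ≤ M)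
    (hlt : ∃ y ∈ Set.Icc (p 1) (q 1), φ y < M) :
    warpedDist φ p q
      < √((q 0 - p 0) ^ 2 + (q 1 - p 1) ^ 2 + (1 + M) * (q 2 - p 2) ^ 2) := by
  have image_eq : AffineMap.lineMap (p 1) (q 1) '' Set.Icc (0 : ℝ) 1 = Set.Icc (p 1) (q 1) := by
    rw [← segment_eq_image_lineMap, segment_eq_Icc h1]
  have hcont : Continuous fun t : ℝ ↦
      warpedSpeed φ (AffineMap.lineMap (p 1) (q 1) t) (q - p) := by
    unfold warpedSpeed
    fun_prop
  obtain ⟨y, hy, hyM⟩ := hlt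
  obtain ⟨t₀, ht₀, rfl⟩ := image_eq ▸ hy
  calc warpedDist φ p q
      ≤ ∫ t in (0 : ℝ)..1, warpedSpeed φ (AffineMap.lineMap (p 1) (q 1) t) (q - p) :=
        warpedLength_lineMap ▸
          warpedDist_le_warpedLength (contDiff_lineMap p q) (by simp) (by simp)
    _ < ∫ _ in (0 : ℝ)..1,
          √((q 0 - p 0) ^ 2 + (q 1 - p 1) ^ 2 + (1 + M) * (q 2 - p 2) ^ 2) :=
        intervalIntegral.integral_lt_integral_of_continuousOn_of_le_of_exists_lt one_pos
          hcont.continuousOn continuousOn_const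
          (fun t ht ↦ warpedSpeed_le_sqrt
            (hM _ (image_eq ▸ Set.mem_image_of_mem _ (Set.Ioc_subset_Icc_self ht))))
          ⟨t₀, ht₀, warpedSpeed_lt_sqrt (hφ0 _) hyM (sub_ne_zero.2 h2.symm)⟩
    _ = √((q 0 - p 0) ^ 2 + (q 1 - p 1) ^ 2 + (1 + M) * (q 2 - p 2) ^ 2) := by simp

end Distance

lemma exists_eq_sqrt_add_one_add_sq_mul {s h M d : ℝ} (hM : 0 ≤ M) (hlo : √(s + h ^ 2) < d)
    (hhi : d < √(s + (1 + M) * h ^ 2)) :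
    ∃ ξ, 0 < ξ ∧ ξ < √(1 + M) - 1 ∧ d = √(s + (1 + ξ) ^ 2 * h ^ 2) := by
  have hξ : 0 ≤ √(1 + M) - 1 := sub_nonneg.2 (Real.one_le_sqrt.2 (by linarith))
  have hcont : Continuous fun ξ : ℝ ↦ √(s + (1 + ξ) ^ 2 * h ^ 2) := by fun_prop
  obtain ⟨ξ, ⟨hξ0, hξM⟩, hξd⟩ := intermediate_value_Ioo hξ hcont.continuousOn
    (show d ∈ Set.Ioo _ _ by
      simpa [Real.sq_sqrt (show 0 ≤ 1 + M by linarith)] using And.intro hlo hhi)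
  exact ⟨ξ, hξ0, hξM, hξd.symm⟩

theorem exists_warpedDist_eq_sqrt {φ : ℝ → ℝ} {p q : E3} {M : ℝ} (hφ : Continuous φ)
    (hφ0 : ∀ y, 0 ≤ φ y) (h1 : p 1 < q 1) (h2 : p 2 ≠ q 2)
    (hM : ∀ y ∈ Set.Icc (p 1) (q 1), φ y ≤ M) (hlt : ∃ y ∈ Set.Icc (p 1) (q 1), φ y < M)
    (hpos : ∃ y ∈ Set.Icc (p 1) (q 1), 0 < φ y) :
    ∃ ξ, 0 < ξ ∧ ξ < √(1 + M) - 1 ∧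
      warpedDist φ p q
        = √((q 0 - p 0) ^ 2 + (q 1 - p 1) ^ 2 + (1 + ξ) ^ 2 * (q 2 - p 2) ^ 2) := by
  have hM0 : 0 ≤ M := hlt.elim fun y hy ↦ (hφ0 y).trans hy.2.le
  refine exists_eq_sqrt_add_one_add_sq_mul hM0 ?_ (warpedDist_lt_sqrt hφ hφ0 h1.le h2 hM hlt)
  rw [← dist_sq_eq_coord, Real.sqrt_sq dist_nonneg]
  exact dist_lt_warpedDist hφ hφ0 h1 h2 hpos

theorem exists_xi_tilde_general {φ : ℝ → ℝ} (hφ : Continuous φ) (hφ0 : ∀ y, 0 ≤ φ y)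
    {α b ε : ℝ} (hα : 0 < α) (hb : 0 < b) (hε : 0 < ε)
    (hmax : ∀ y ∈ Set.Icc 0 (b * ε), φ y ≤ φ 0) (hlt : ∃ y ∈ Set.Icc 0 (b * ε), φ y < φ 0) :
    ∃ ξ : ℝ, 0 < ξ ∧ ξ < √(1 + φ 0) - 1 ∧
      warpedDist φ (pt 0 0 (α * ε)) (pt 0 (b * ε) 0)
        = b * ε * √((1 + ξ) ^ 2 * α ^ 2 / b ^ 2 + 1) := by
  have hbε : 0 < b * ε := mul_pos hb hε
  have hpos : 0 < φ 0 := hlt.elim fun y hy ↦ (hφ0 y).trans_lt hy.2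
  obtain ⟨ξ, hξ0, hξ, hdist⟩ := exists_warpedDist_eq_sqrt (p := pt 0 0 (α * ε))
    (q := pt 0 (b * ε) 0) hφ hφ0 hbε (mul_pos hα hε).ne' hmax hlt
    ⟨0, Set.left_mem_Icc.2 hbε.le, hpos⟩
  refine ⟨ξ, hξ0, hξ, hdist.trans ?_⟩
  calc √((0 - 0) ^ 2 + (b * ε - 0) ^ 2 + (1 + ξ) ^ 2 * (0 - α * ε) ^ 2)
      = √((b * ε) ^ 2 * ((1 + ξ) ^ 2 * α ^ 2 / b ^ 2 + 1)) := by
        congr 1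
        field_simp
        ring
    _ = b * ε * √((1 + ξ) ^ 2 * α ^ 2 / b ^ 2 + 1) := by
        rw [Real.sqrt_mul (sq_nonneg _), Real.sqrt_sq hbε.le]

section CosineBump

variable {A : ℝ}

lemma continuous_f (A : ℝ) : Continuous (f A) := by
  unfold f
  fun_prop

lemma f_nonneg (hA : 0 ≤ A) (y : ℝ) : 0 ≤ f A y :=
  mul_nonneg hA (by linarith [Real.neg_one_le_cos (π * y)])

lemma f_le_f_zero (hA : 0 ≤ A) (y : ℝ) : f A y ≤ f A 0 := by
  simpa [f] using mul_le_mul_of_nonneg_left (add_le_add_right (Real.cos_le_one (π * y)) 1) hA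

lemma f_lt_f_zero (hA : 0 < A) {y : ℝ} (hy0 : 0 < y) (hy1 : y ≤ 1) : f A y < f A 0 := by
  have hcos : Real.cos (π * y) < Real.cos (π * 0) :=
    Real.cos_lt_cos_of_nonneg_of_le_pi (by simp) (mul_le_of_le_one_right pi_pos.le hy1) (by gcongr)
  unfold f
  gcongr

lemma exists_f_lt_f_zero (hA : 0 < A) {B : ℝ} (hB : 0 < B) :
    ∃ y ∈ Set.Icc 0 B, f A y < f A 0 :=
  have hy : 0 < min B 1 := lt_min hB one_pos
  ⟨min B 1, ⟨hy.le, min_le_left B 1⟩, f_lt_f_zero hA hy (min_le_right B 1)⟩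

end CosineBump

/-- There exists `ξ̃` with `0 < ξ̃ < ξ₀` such that
`d_g(u, c) = bε √((1 + ξ̃)² a²/b² + 1)`. -/
theorem exists_xi_tilde (A : ℝ) (hA0 : 0 < A) (hA : A ≤ 3 / 8)
    (ε b : ℝ) (hε0 : 0 < ε) (hε1 : ε ≤ 1) (hb : 0 < b) (hbε : b * ε ≤ 1 / 2) :
    ∃ ξ : ℝ, 0 < ξ ∧ ξ < ξ₀ A ∧
      dg A (pt 0 0 (a * ε)) (pt 0 (b * ε) 0)
        = b * ε * Real.sqrt ((1 + ξ) ^ 2 * a ^ 2 / b ^ 2 + 1) :=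
  exists_xi_tilde_general (continuous_f A) (f_nonneg hA0.le) (by unfold a; positivity) hb hε0
    (fun y _ ↦ f_le_f_zero hA0.le y) (exists_f_lt_f_zero hA0 (mul_pos hb hε0))
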